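/- arXiv:1310.8010 — 2 statements merged into one kernel-verified Lean document; each statement's English description precedes it below -/
import Mathlib

section
/- Let H be a real Hilbert space and let A : H → H be a nonzero skew-adjoint Hilbert–Schmidt operator (A* = −A). Then there exists a unit vector u ∈ H such that A² u = −‖A‖_op² · u; in particular ‖A u‖ = ‖A‖_op and ⟨A u, u⟩ = 0. -/
/-!
If `S` is a formal adjoint of `T`, then expanding the square gives
`‖S T x - ‖T‖² x‖² ≤ ‖T‖² (‖T‖² ‖x‖² - ‖T x‖²)`. The right-hand side is small relative to `‖x‖²`
whenever `x` nearly attains the norm of `T`, so `S T - ‖T‖²` is not bounded below; when `T` is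
compact and nonzero, the Fredholm alternative makes `‖T‖²` an eigenvalue of `S T`. For a
skew-adjoint `A` this applies with `T = A` and `S = -A`. A Hilbert–Schmidt operator is compact
because its expansion into rank-one operators along a Hilbert basis converges in operator norm, by
the Cauchy–Schwarz and Bessel inequalities.
-/

open scoped ENNReal

noncomputable section

/-- The squared Hilbert–Schmidt norm of a continuous linear operator `A` on a real
Hilbert space, computed with respect to a Hilbert basis `b`. -/
def hsNormSq {H : Type*} [NormedAddCommGroup H] [InnerProductSpace ℝ H] {ι : Type*}
    (b : HilbertBasis ι ℝ H) (A : H →L[ℝ] H) : ℝ≥0∞ :=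
  ∑' i, (‖A (b i)‖₊ : ℝ≥0∞) ^ 2

open InnerProductSpace Module.End

section

variable {𝕜 E F ι : Type*} [RCLike 𝕜]
  [NormedAddCommGroup E] [InnerProductSpace 𝕜 E] [NormedAddCommGroup F] [InnerProductSpace 𝕜 F]

theorem isCompactOperator_rankOne (y : F) (x : E) : IsCompactOperator (rankOne 𝕜 y x) :=
  (isCompactOperator_of_locallyCompactSpace_dom (innerSL 𝕜 x)).clm_comp (.toSpanSingleton 𝕜 y)

theorem norm_sum_rankOne_le {v : ι → E} (hv : Orthonormal 𝕜 v) (w : ι → F) (t : Finset ι) :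
    ‖∑ i ∈ t, rankOne 𝕜 (w i) (v i)‖ ≤ √(∑ i ∈ t, ‖w i‖ ^ 2) := by
  refine ContinuousLinearMap.opNorm_le_bound _ (Real.sqrt_nonneg _) fun x => ?_
  have bessel : √(∑ i ∈ t, ‖inner 𝕜 (v i) x‖ ^ 2) ≤ ‖x‖ :=
    Real.sqrt_le_iff.2 ⟨norm_nonneg x, hv.sum_inner_products_le x⟩
  calc ‖(∑ i ∈ t, rankOne 𝕜 (w i) (v i)) x‖
      = ‖∑ i ∈ t, inner 𝕜 (v i) x • w i‖ := by simp
    _ ≤ ∑ i ∈ t, ‖w i‖ * ‖inner 𝕜 (v i) x‖ :=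
        norm_sum_le_of_le t fun i _ => (norm_smul _ _).trans (mul_comm _ _) |>.le
    _ ≤ √(∑ i ∈ t, ‖w i‖ ^ 2) * √(∑ i ∈ t, ‖inner 𝕜 (v i) x‖ ^ 2) :=
        Real.sum_mul_le_sqrt_mul_sqrt _ _ _
    _ ≤ √(∑ i ∈ t, ‖w i‖ ^ 2) * ‖x‖ := by gcongr

theorem summable_rankOne_of_summable_norm_sq [CompleteSpace F] {v : ι → E} (hv : Orthonormal 𝕜 v)
    {w : ι → F} (hw : Summable fun i => ‖w i‖ ^ 2) :
    Summable fun i => rankOne 𝕜 (w i) (v i) := by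
  rw [summable_iff_vanishing_norm] at hw ⊢
  intro ε hε
  obtain ⟨s, hs⟩ := hw (ε ^ 2) (by positivity)
  refine ⟨s, fun t ht => (norm_sum_rankOne_le hv w t).trans_lt ?_⟩
  exact (Real.sqrt_lt' hε).2 ((le_abs_self _).trans_lt (hs t ht))

theorem hasSum_rankOne_of_summable_norm_sq [CompleteSpace F] (b : HilbertBasis ι 𝕜 E)
    {T : E →L[𝕜] F} (hT : Summable fun i => ‖T (b i)‖ ^ 2) :
    HasSum (fun i => rankOne 𝕜 (T (b i)) (b i)) T := by
  have hsum := (summable_rankOne_of_summable_norm_sq b.orthonormal hT).hasSum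
  convert hsum
  ext x
  have hTx : HasSum (fun i => rankOne 𝕜 (T (b i)) (b i) x) (T x) := by
    simpa [b.repr_apply_apply] using (b.hasSum_repr x).mapL T
  exact hTx.unique (hsum.mapL (ContinuousLinearMap.apply 𝕜 F x))

theorem isCompactOperator_of_summable_norm_sq [CompleteSpace F] (b : HilbertBasis ι 𝕜 E)
    {T : E →L[𝕜] F} (hT : Summable fun i => ‖T (b i)‖ ^ 2) : IsCompactOperator T := by
  refine isCompactOperator_of_tendsto (hasSum_rankOne_of_summable_norm_sq b hT)
    (.of_forall fun t => ?_)
  exact sum_mem (S := compactOperator (RingHom.id 𝕜) E F)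
    fun i _ => isCompactOperator_rankOne (T (b i)) (b i)

theorem opNorm_sq_le_of_forall_norm_sq_le {T : E →L[𝕜] F} (hT : T ≠ 0) {M : ℝ}
    (hM : ∀ x, ‖T x‖ ^ 2 ≤ M * ‖x‖ ^ 2) : ‖T‖ ^ 2 ≤ M := by
  rw [← Real.le_sqrt' (norm_pos_iff.2 hT)]
  refine T.opNorm_le_bound (Real.sqrt_nonneg M) fun x => ?_
  calc ‖T x‖ ≤ √(M * ‖x‖ ^ 2) := Real.le_sqrt_of_sq_le (hM x)
    _ = √M * ‖x‖ := by rw [Real.sqrt_mul' M (sq_nonneg _), Real.sqrt_sq (norm_nonneg x)]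

section FormalAdjoint

variable {T : E →L[𝕜] F} {S : F →L[𝕜] E}

theorem re_inner_formalAdjoint_comp_self
    (hTS : ∀ x y, inner 𝕜 (T x) y = inner 𝕜 x (S y)) (x : E) :
    RCLike.re (inner 𝕜 (S (T x)) x) = ‖T x‖ ^ 2 := by
  rw [inner_re_symm, ← hTS, inner_self_eq_norm_sq]

theorem norm_formalAdjoint_apply_le
    (hTS : ∀ x y, inner 𝕜 (T x) y = inner 𝕜 x (S y)) (y : F) :
    ‖S y‖ ≤ ‖T‖ * ‖y‖ := by
  have h : ‖S y‖ * ‖S y‖ ≤ ‖S y‖ * (‖T‖ * ‖y‖) :=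
    calc ‖S y‖ * ‖S y‖ = RCLike.re (inner 𝕜 (T (S y)) y) := by rw [hTS, inner_self_eq_norm_mul_norm]
      _ ≤ ‖T (S y)‖ * ‖y‖ := re_inner_le_norm _ _
      _ ≤ ‖T‖ * ‖S y‖ * ‖y‖ := by gcongr; exact T.le_opNorm _
      _ = ‖S y‖ * (‖T‖ * ‖y‖) := by ring
  rcases (norm_nonneg (S y)).eq_or_lt with h0 | hpos
  · rw [← h0]; positivity
  · exact le_of_mul_le_mul_left h hpos

theorem norm_formalAdjoint_comp_sub_smul_sq_le
    (hTS : ∀ x y, inner 𝕜 (T x) y = inner 𝕜 x (S y)) (x : E) :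
    ‖S (T x) - (‖T‖ ^ 2 : 𝕜) • x‖ ^ 2 ≤ ‖T‖ ^ 2 * (‖T‖ ^ 2 * ‖x‖ ^ 2 - ‖T x‖ ^ 2) := by
  have hcross : RCLike.re (inner 𝕜 (S (T x)) ((‖T‖ ^ 2 : 𝕜) • x)) = ‖T‖ ^ 2 * ‖T x‖ ^ 2 := by
    rw [← RCLike.ofReal_pow, inner_smul_right, RCLike.re_ofReal_mul,
      re_inner_formalAdjoint_comp_self hTS]
  have hST : ‖S (T x)‖ ^ 2 ≤ ‖T‖ ^ 2 * ‖T x‖ ^ 2 := by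
    rw [← mul_pow]
    gcongr
    exact norm_formalAdjoint_apply_le hTS (T x)
  have hsmul : ‖(‖T‖ ^ 2 : 𝕜) • x‖ = ‖T‖ ^ 2 * ‖x‖ := by simp [norm_smul]
  rw [norm_sub_sq (𝕜 := 𝕜), hcross, hsmul]
  linarith

theorem hasEigenvalue_formalAdjoint_comp
    (hTS : ∀ x y, inner 𝕜 (T x) y = inner 𝕜 x (S y))
    (hT : IsCompactOperator T) (hT0 : T ≠ 0) :
    HasEigenvalue (S ∘L T : E →ₗ[𝕜] E) (‖T‖ ^ 2 : 𝕜) := by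
  have hpos : 0 < ‖T‖ ^ 2 := pow_pos (norm_pos_iff.2 hT0) 2
  by_contra h
  obtain ⟨K, hK⟩ := IsCompactOperator.antilipschitz_of_not_hasEigenvalue (T := S ∘L T)
    (hT.clm_comp S) (by simpa using hT0) h
  obtain ⟨c, hc, hbelow⟩ : ∃ c > 0, ∀ x, c * ‖x‖ ≤ ‖S (T x) - (‖T‖ ^ 2 : 𝕜) • x‖ :=
    antilipschitzWith_iff_exists_mul_le_norm.1 ⟨K, hK⟩
  have hgap : ‖T‖ ^ 2 ≤ ‖T‖ ^ 2 - c ^ 2 / ‖T‖ ^ 2 := by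
    refine opNorm_sq_le_of_forall_norm_sq_le hT0 fun x => ?_
    have hx : (c * ‖x‖) ^ 2 ≤ ‖T‖ ^ 2 * (‖T‖ ^ 2 * ‖x‖ ^ 2 - ‖T x‖ ^ 2) :=
      (pow_le_pow_left₀ (by positivity) (hbelow x) 2).trans
        (norm_formalAdjoint_comp_sub_smul_sq_le hTS x)
    rw [← div_le_iff₀' hpos, mul_pow, mul_div_right_comm] at hx
    linarith
  linarith [div_pos (pow_pos hc 2) hpos]

theorem exists_unit_singularVector
    (hTS : ∀ x y, inner 𝕜 (T x) y = inner 𝕜 x (S y))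
    (hT : IsCompactOperator T) (hT0 : T ≠ 0) :
    ∃ u : E, ‖u‖ = 1 ∧ S (T u) = (‖T‖ ^ 2 : 𝕜) • u ∧ ‖T u‖ = ‖T‖ := by
  obtain ⟨x, hx⟩ := (hasEigenvalue_formalAdjoint_comp hTS hT hT0).exists_hasEigenvector
  set u : E := (‖x‖⁻¹ : 𝕜) • x
  have hu : ‖u‖ = 1 := norm_smul_inv_norm hx.2
  have heig : S (T u) = (‖T‖ ^ 2 : 𝕜) • u :=
    mem_eigenspace_iff.1 (Submodule.smul_mem _ _ hx.1)
  refine ⟨u, hu, heig, (sq_eq_sq₀ (norm_nonneg _) (norm_nonneg _)).1 ?_⟩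
  rw [← re_inner_formalAdjoint_comp_self hTS, heig, ← RCLike.ofReal_pow, inner_smul_left,
    RCLike.conj_ofReal, RCLike.re_ofReal_mul, inner_self_eq_norm_sq, hu, one_pow, mul_one]

end FormalAdjoint

end

section

variable {H : Type*} [NormedAddCommGroup H] [InnerProductSpace ℝ H] {ι : Type*}

theorem hsNormSq_lt_top_iff_summable (b : HilbertBasis ι ℝ H) (A : H →L[ℝ] H) :
    hsNormSq b A < ∞ ↔ Summable fun i => ‖A (b i)‖ ^ 2 := by
  simp only [hsNormSq, ← ENNReal.coe_pow, lt_top_iff_ne_top,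
    ENNReal.tsum_coe_ne_top_iff_summable, ← NNReal.summable_coe, NNReal.coe_pow, coe_nnnorm]

theorem isCompactOperator_of_hsNormSq_lt_top [CompleteSpace H] (b : HilbertBasis ι ℝ H)
    {A : H →L[ℝ] H} (hA : hsNormSq b A < ∞) : IsCompactOperator A :=
  isCompactOperator_of_summable_norm_sq b ((hsNormSq_lt_top_iff_summable b A).1 hA)

theorem exists_unit_eigenvector_of_skewAdjoint_general {A : H →L[ℝ] H} (hcpt : IsCompactOperator A)
    (hskew : ∀ x y : H, inner ℝ (A x) y = -inner ℝ x (A y)) (hA : A ≠ 0) :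
    ∃ u : H, ‖u‖ = 1 ∧ A (A u) = -(‖A‖ ^ 2) • u ∧ ‖A u‖ = ‖A‖ ∧ inner ℝ (A u) u = 0 := by
  have hadj : ∀ x y : H, inner ℝ (A x) y = inner ℝ x ((-A) y) := by simpa using hskew
  obtain ⟨u, hu, heig, hnorm⟩ := exists_unit_singularVector hadj hcpt hA
  refine ⟨u, hu, ?_, hnorm, ?_⟩
  · simpa [neg_eq_iff_eq_neg] using heig
  · exact self_eq_neg.1 ((hskew u u).trans (by rw [real_inner_comm]))

end

/-- If `A` is a nonzero skew-adjoint Hilbert–Schmidt operator on a real Hilbert space,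
then there is a unit vector `u` with `A² u = −‖A‖_op² u`; in particular
`‖A u‖ = ‖A‖_op` and `⟨A u, u⟩ = 0`. -/
theorem exists_unit_eigenvector_of_skewAdjoint
    {H : Type*} [NormedAddCommGroup H] [InnerProductSpace ℝ H] [CompleteSpace H]
    [TopologicalSpace.SeparableSpace H]
    {ι : Type} (b : HilbertBasis ι ℝ H)
    (A : H →L[ℝ] H) (hHS : hsNormSq b A < ∞)
    (hskew : ∀ x y : H, (inner ℝ (A x) y : ℝ) = -(inner ℝ x (A y) : ℝ))
    (hA : A ≠ 0) :
    ∃ u : H, ‖u‖ = 1 ∧ A (A u) = -(‖A‖ ^ 2) • u ∧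
      ‖A u‖ = ‖A‖ ∧ (inner ℝ (A u) u : ℝ) = 0 :=
  exists_unit_eigenvector_of_skewAdjoint_general (isCompactOperator_of_hsNormSq_lt_top b hHS)
    hskew hA

end
end

section
/- Let A be a real N×N skew-symmetric matrix (Aᵀ = −A). For f : ℝᴺ → ℝ define (Sf)(x) = ⟨Ax, ∇f(x)⟩ and (Lf)(x) = (1/2)Δf(x) − (1/2)‖Ax‖²·f(x). Then the operators S and L commute on smooth functions: for every infinitely differentiable f : ℝᴺ → ℝ and every x ∈ ℝᴺ, S(Lf)(x) = L(Sf)(x). -/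
noncomputable section

/-- The Laplacian of `f : ℝᴺ → ℝ` at `x`: the trace of the second derivative,
`Δf(x) = ∑ i, D²f(x)(eᵢ, eᵢ)` with `(eᵢ)` the standard orthonormal basis. -/
def lap {N : ℕ} (f : EuclideanSpace ℝ (Fin N) → ℝ) (x : EuclideanSpace ℝ (Fin N)) : ℝ :=
  ∑ i : Fin N, fderiv ℝ (fderiv ℝ f) x (EuclideanSpace.single i (1 : ℝ))
    (EuclideanSpace.single i (1 : ℝ))

/-!
Write `X` for differentiation along the linear vector field `x ↦ T x`. Differentiating `X f` gives
`D(X f) = X(D f) + D f ∘ T`, and a second derivative gives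
`D²(X f)(u, v) = X(D² f)(u, v) + D² f(T u, v) + D² f(u, T v)`. Taking the trace,
`Δ(X f) = X(Δ f) + 2 ∑ i, D² f(eᵢ, T eᵢ)`, and the last sum pairs a symmetric form with a skew map,
so it vanishes: the flow of `T` consists of rotations and these preserve `Δ`. Moreover
`X ‖T x‖² = 2 ⟪T x, T (T x)⟫ = 0`, so multiplication by `‖T x‖²` also commutes with `X`.
-/

section Calculus

variable {E F : Type*} [NormedAddCommGroup E] [NormedSpace ℝ E]
  [NormedAddCommGroup F] [NormedSpace ℝ F]

/-- The derivative of `f` along the linear vector field `x ↦ T x`, i.e. its Lie derivative;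
the operator `S` for the map `T`. -/
def derivAlong (T : E →L[ℝ] E) (f : E → F) (x : E) : F :=
  fderiv ℝ f x (T x)

variable {T : E →L[ℝ] E} {f : E → F} {x : E}

lemma differentiableAt_fderiv (hf : ContDiffAt ℝ 2 f x) : DifferentiableAt ℝ (fderiv ℝ f) x :=
  (hf.fderiv_right (m := 1) (by norm_num)).differentiableAt one_ne_zero

lemma differentiableAt_fderiv_fderiv (hf : ContDiffAt ℝ 3 f x) :
    DifferentiableAt ℝ (fderiv ℝ (fderiv ℝ f)) x :=
  differentiableAt_fderiv (hf.fderiv_right (by norm_num))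

lemma derivAlong_smul {V : E → ℝ} (hV : DifferentiableAt ℝ V x) (hf : DifferentiableAt ℝ f x) :
    derivAlong T (fun y ↦ V y • f y) x = V x • derivAlong T f x + derivAlong T V x • f x := by
  simp [derivAlong, fderiv_fun_smul hV hf]

lemma fderiv_derivAlong (hf : ContDiffAt ℝ 2 f x) :
    fderiv ℝ (derivAlong T f) x = derivAlong T (fderiv ℝ f) x + (fderiv ℝ f x).comp T := by
  have hsymm : IsSymmSndFDerivAt ℝ f x := hf.isSymmSndFDerivAt (by simp)
  ext v
  have hleibniz : fderiv ℝ (derivAlong T f) x v =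
      fderiv ℝ f x (T v) + fderiv ℝ (fderiv ℝ f) x v (T x) := by
    unfold derivAlong
    simp [fderiv_clm_apply (differentiableAt_fderiv hf) T.differentiableAt]
  rw [hleibniz, hsymm.eq v (T x), add_comm]
  rfl

lemma fderiv_fderiv_derivAlong_apply (hf : ContDiffAt ℝ 3 f x) (u v : E) :
    fderiv ℝ (fderiv ℝ (derivAlong T f)) x u v =
      derivAlong T (fderiv ℝ (fderiv ℝ f)) x u v
        + fderiv ℝ (fderiv ℝ f) x (T u) v + fderiv ℝ (fderiv ℝ f) x u (T v) := by
  have hDf : ContDiffAt ℝ 2 (fderiv ℝ f) x := hf.fderiv_right (by norm_num)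
  have hDf' : DifferentiableAt ℝ (fderiv ℝ f) x := hDf.differentiableAt two_ne_zero
  have hXDf : DifferentiableAt ℝ (derivAlong T (fderiv ℝ f)) x :=
    (differentiableAt_fderiv hDf).clm_apply T.differentiableAt
  have hnear : fderiv ℝ (derivAlong T f) =ᶠ[nhds x]
      fun y ↦ derivAlong T (fderiv ℝ f) y + (fderiv ℝ f y).comp T := by
    filter_upwards [(hf.of_le (by norm_num : (2 : WithTop ℕ∞) ≤ 3)).eventually (by simp)] with y hy
    exact fderiv_derivAlong hy
  rw [hnear.fderiv_eq, fderiv_fun_add hXDf (hDf'.clm_comp (differentiableAt_const T)),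
    fderiv_derivAlong hDf, fderiv_clm_comp hDf' (differentiableAt_const T)]
  simp

end Calculus

section InnerProductSpace

open Laplacian
open scoped RealInnerProductSpace

variable {ι E F : Type*} [Fintype ι] [NormedAddCommGroup E] [InnerProductSpace ℝ E]

lemma inner_apply_self_eq_zero_of_skew {T : E → E} (hT : ∀ u v, ⟪T u, v⟫ = -⟪u, T v⟫) (u : E) :
    ⟪u, T u⟫ = 0 :=
  self_eq_neg.mp <| (real_inner_comm _ _).trans (hT u u)

lemma sum_symm_apply_skew_eq_zero [AddCommGroup F] [Module ℝ F] {T : E → E}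
    (hT : ∀ u v, ⟪T u, v⟫ = -⟪u, T v⟫) {B : E →ₗ[ℝ] E →ₗ[ℝ] F} (hB : ∀ u v, B u v = B v u)
    (b : OrthonormalBasis ι ℝ E) :
    ∑ i, B (b i) (T (b i)) = 0 := by
  have : IsAddTorsionFree F := .of_isTorsionFree ℝ F
  have hexpand : ∑ i, B (b i) (T (b i)) = ∑ i, ∑ j, ⟪b j, T (b i)⟫ • B (b i) (b j) := by
    refine Finset.sum_congr rfl fun i _ ↦ ?_
    conv_lhs => rw [← b.sum_repr' (T (b i))]
    simp only [map_sum, map_smul]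
  have hanti (i j : ι) :
      ⟪b j, T (b i)⟫ • B (b i) (b j) = -(⟪b i, T (b j)⟫ • B (b j) (b i)) := by
    rw [hB (b j), ← neg_smul, ← hT, real_inner_comm]
  refine self_eq_neg.mp ?_
  calc
    ∑ i, B (b i) (T (b i)) = ∑ i, ∑ j, -(⟪b i, T (b j)⟫ • B (b j) (b i)) := by
      simp only [hexpand, ← hanti]
    _ = -∑ j, ∑ i, ⟪b i, T (b j)⟫ • B (b j) (b i) := by
      simp only [Finset.sum_neg_distrib]
      rw [Finset.sum_comm]
    _ = -∑ i, B (b i) (T (b i)) := by rw [hexpand]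

variable [NormedAddCommGroup F] [NormedSpace ℝ F]
variable {T : E →L[ℝ] E} {f : E → F} {x : E}

lemma derivAlong_norm_sq_apply_of_skew (hT : ∀ u v, ⟪T u, v⟫ = -⟪u, T v⟫) :
    derivAlong T (fun y ↦ ‖T y‖ ^ 2) x = 0 := by
  simp [derivAlong, T.hasFDerivAt.norm_sq.fderiv, inner_apply_self_eq_zero_of_skew hT]

variable [FiniteDimensional ℝ E]

lemma laplacian_eq_sum_fderiv (b : OrthonormalBasis ι ℝ E) (f : E → F) :
    Δ f = fun x ↦ ∑ i, fderiv ℝ (fderiv ℝ f) x (b i) (b i) := by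
  simp [InnerProductSpace.laplacian_eq_iteratedFDeriv_orthonormalBasis f b,
    iteratedFDeriv_two_apply]

lemma differentiableAt_laplacian (hf : ContDiffAt ℝ 3 f x) : DifferentiableAt ℝ (Δ f) x := by
  have hD2f := differentiableAt_fderiv_fderiv hf
  rw [laplacian_eq_sum_fderiv (stdOrthonormalBasis ℝ E)]
  fun_prop

lemma derivAlong_laplacian (hf : ContDiffAt ℝ 3 f x) (b : OrthonormalBasis ι ℝ E) :
    derivAlong T (Δ f) x = ∑ i, derivAlong T (fderiv ℝ (fderiv ℝ f)) x (b i) (b i) := by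
  have hD2f := differentiableAt_fderiv_fderiv hf
  have hentry (i : ι) : HasFDerivAt (fun y ↦ fderiv ℝ (fderiv ℝ f) y (b i) (b i)) _ x :=
    (hD2f.hasFDerivAt.clm_apply (hasFDerivAt_const (b i) x)).clm_apply (hasFDerivAt_const (b i) x)
  rw [laplacian_eq_sum_fderiv b, derivAlong, (HasFDerivAt.fun_sum fun i _ ↦ hentry i).fderiv]
  simp [derivAlong]

lemma laplacian_derivAlong (hf : ContDiffAt ℝ 3 f x) (b : OrthonormalBasis ι ℝ E) :
    Δ (derivAlong T f) x =
      derivAlong T (Δ f) x + (2 : ℝ) • ∑ i, fderiv ℝ (fderiv ℝ f) x (b i) (T (b i)) := by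
  have hsymm : IsSymmSndFDerivAt ℝ f x := hf.isSymmSndFDerivAt (by norm_num)
  simp only [derivAlong_laplacian hf b, laplacian_eq_sum_fderiv b (derivAlong T f),
    fderiv_fderiv_derivAlong_apply hf, hsymm.eq (T _), Finset.sum_add_distrib, two_smul, add_assoc]

lemma laplacian_derivAlong_of_skew (hT : ∀ u v, ⟪T u, v⟫ = -⟪u, T v⟫) (hf : ContDiffAt ℝ 3 f x) :
    Δ (derivAlong T f) x = derivAlong T (Δ f) x := by
  have hsymm : IsSymmSndFDerivAt ℝ f x := hf.isSymmSndFDerivAt (by norm_num)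
  have htrace := sum_symm_apply_skew_eq_zero hT (B := (fderiv ℝ (fderiv ℝ f) x).toLinearMap₁₂)
    hsymm.eq (stdOrthonormalBasis ℝ E)
  rw [laplacian_derivAlong hf (stdOrthonormalBasis ℝ E)]
  simpa using htrace

/-- The Schrödinger operator `½Δ - V` with potential `V`, signed as the generator of a diffusion
killed at rate `V`; the operator `L` is the case `V x = ½‖T x‖²`. -/
def schrodingerOperator (V : E → ℝ) (f : E → F) (x : E) : F :=
  (1 / 2 : ℝ) • Δ f x - V x • f x

lemma derivAlong_schrodingerOperator_comm (hT : ∀ u v, ⟪T u, v⟫ = -⟪u, T v⟫) {V : E → ℝ}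
    (hV : DifferentiableAt ℝ V x) (hTV : derivAlong T V x = 0) (hf : ContDiffAt ℝ 3 f x) :
    derivAlong T (schrodingerOperator V f) x = schrodingerOperator V (derivAlong T f) x := by
  have hf' : DifferentiableAt ℝ f x := hf.differentiableAt three_ne_zero
  have hΔf := differentiableAt_laplacian hf
  calc
    derivAlong T (schrodingerOperator V f) x =
        (1 / 2 : ℝ) • derivAlong T (Δ f) x - derivAlong T (fun y ↦ V y • f y) x := by
      unfold schrodingerOperator derivAlong
      rw [fderiv_fun_sub (hΔf.fun_const_smul (1 / 2 : ℝ)) (hV.fun_smul hf'),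
        fderiv_fun_const_smul hΔf]
      rfl
    _ = schrodingerOperator V (derivAlong T f) x := by
      rw [derivAlong_smul hV hf', hTV, zero_smul, add_zero, ← laplacian_derivAlong_of_skew hT hf]
      rfl

theorem S_L_commute_general {T : E →L[ℝ] E} (hT : ∀ u v, ⟪T u, v⟫ = -⟪u, T v⟫)
    {S L : (E → F) → E → F} (hS : ∀ f x, S f x = fderiv ℝ f x (T x))
    (hL : ∀ f x, L f x = (1 / 2 : ℝ) • Δ f x - (1 / 2 * ‖T x‖ ^ 2) • f x)
    {f : E → F} {x : E} (hf : ContDiffAt ℝ 3 f x) :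
    S (L f) x = L (S f) x := by
  obtain rfl : S = derivAlong T := funext₂ hS
  obtain rfl : L = schrodingerOperator fun y ↦ 1 / 2 * ‖T y‖ ^ 2 := funext₂ hL
  have hV : DifferentiableAt ℝ (fun y ↦ ‖T y‖ ^ 2) x := T.differentiableAt.norm_sq ℝ
  have hTV : derivAlong T (fun y ↦ 1 / 2 * ‖T y‖ ^ 2) x = 0 := by
    simpa [derivAlong, fderiv_const_mul hV] using derivAlong_norm_sq_apply_of_skew (x := x) hT
  exact derivAlong_schrodingerOperator_comm hT (hV.const_mul _) hTV hf

end InnerProductSpace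

lemma lap_eq_laplacian {N : ℕ} (f : EuclideanSpace ℝ (Fin N) → ℝ) :
    lap f = Laplacian.laplacian f := by
  rw [laplacian_eq_sum_fderiv (EuclideanSpace.basisFun (Fin N) ℝ)]
  ext x
  simp [lap]

lemma inner_toEuclideanCLM_of_transpose_eq_neg {n : Type*} [Fintype n] [DecidableEq n]
    {A : Matrix n n ℝ} (hA : A.transpose = -A) (u v : EuclideanSpace ℝ n) :
    inner ℝ (Matrix.toEuclideanCLM (𝕜 := ℝ) A u) v =
      -inner ℝ u (Matrix.toEuclideanCLM (𝕜 := ℝ) A v) := by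
  rw [← ContinuousLinearMap.adjoint_inner_right, ← ContinuousLinearMap.star_eq_adjoint, ← map_star,
    Matrix.star_eq_conjTranspose, Matrix.conjTranspose_eq_transpose_of_trivial, hA, map_neg,
    neg_apply, inner_neg_right]

/-- For a real skew-symmetric matrix `A`, the operators `(Sf)(x) = ⟨Ax, ∇f(x)⟩` and
`(Lf)(x) = (1/2)Δf(x) − (1/2)‖Ax‖² f(x)` commute on smooth functions. -/
theorem S_L_commute (N : ℕ) (A : Matrix (Fin N) (Fin N) ℝ) (hA : A.transpose = -A)
    (S L : (EuclideanSpace ℝ (Fin N) → ℝ) → (EuclideanSpace ℝ (Fin N) → ℝ))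
    (hS : ∀ f x, S f x = (inner ℝ (Matrix.toEuclideanLin A x) (gradient f x) : ℝ))
    (hL : ∀ f x, L f x =
      (1 / 2) * lap f x - (1 / 2) * ‖Matrix.toEuclideanLin A x‖ ^ 2 * f x)
    (f : EuclideanSpace ℝ (Fin N) → ℝ) (hf : ContDiff ℝ (⊤ : ℕ∞) f)
    (x : EuclideanSpace ℝ (Fin N)) :
    S (L f) x = L (S f) x := by
  simp only [inner_gradient_right, conj_trivial, lap_eq_laplacian] at hS hL
  exact S_L_commute_general (inner_toEuclideanCLM_of_transpose_eq_neg hA) hS hL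
    (contDiff_infty.mp hf 3).contDiffAt

end
end
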